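/- Let α be a positive even integer, let h be a positive odd integer, and let a_1, …, a_h be integers coprime to α. Let δ be the number of tuples (y_1, …, y_h) ∈ {0, …, α/2}^h satisfying a_1y_1 + ⋯ + a_hy_h ≡ 0 (mod α). Then δ = ((α/2+1)^h − 1)/α + 1/2; equivalently, 2αδ = 2((α/2+1)^h − 1) + α. -/

import Mathlib

/-!
Write `α = 2m`. Since `∑ aᵢ` is odd,
the reflection `yᵢ ↦ m - yᵢ` of the box `{0, …, m}^h` exchanges the solutions of
`∑ aᵢ yᵢ ≡ 0` and of `∑ aᵢ yᵢ ≡ m` modulo `2m`; together these are the solutions of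
`∑ aᵢ yᵢ ≡ 0` modulo `m`, so there are `2δ` of the latter.

Modulo `m`, the multiset `{aᵢ y : 0 ≤ y ≤ m}` contains every residue once, and `0` once more. In the
group ring `ℤ[ℤ/m]`, with `u` the sum of all group elements, the distribution of `∑ aᵢ yᵢ` is
therefore `(1 + u)^h`, and `u² = m u` gives `m ((1 + u)^h - 1) = ((m + 1)^h - 1) u`.
Comparing coefficients at `0` yields `m (2δ - 1) = (m + 1)^h - 1`.
-/

open Finset AddMonoidAlgebra

section GroupRing

variable (R G : Type*) [Semiring R] [Fintype G]

/-- The sum of all group elements in the group ring `R[G]`: the uniform distribution on `G`,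
up to normalisation. -/
noncomputable def groupSum : AddMonoidAlgebra R G := ∑ g : G, single g 1

variable {R G}

lemma coeff_groupSum (g : G) : (groupSum R G).coeff g = 1 := by
  classical
  simp [groupSum, Finsupp.single_apply]

variable [AddGroup G]

lemma single_mul_groupSum (g : G) : single g 1 * groupSum R G = groupSum R G := by
  simp only [groupSum, mul_sum, single_mul_single, one_mul]
  exact Equiv.sum_comp (Equiv.addLeft g) fun x ↦ single x (1 : R)

lemma groupSum_mul_self :
    groupSum R G * groupSum R G = (Fintype.card G : R) • groupSum R G :=
  calc
    _ = ∑ g : G, single g 1 * groupSum R G := sum_mul ..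
    _ = _ := by simp only [single_mul_groupSum, sum_const, card_univ, Nat.cast_smul_eq_nsmul]

end GroupRing

lemma smul_one_add_pow_sub_one_of_mul_self_eq {R A : Type*} [CommRing R] [CommRing A] [Algebra R A]
    {c : R} {u : A} (hu : u * u = c • u) (n : ℕ) :
    c • ((1 + u) ^ n - 1) = ((c + 1) ^ n - 1) • u := by
  simp only [Algebra.smul_def, map_sub, map_pow, map_add, map_one] at hu ⊢
  induction n with
  | zero => simp
  | succ n ih => linear_combination (1 + u) * ih + ((algebraMap R A c + 1) ^ n - 1) * hu

lemma odd_sum_of_odd_card {ι A : Type*} [Semiring A] {s : Finset ι} {f : ι → A}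
    (hs : Odd #s) (hf : ∀ i ∈ s, Odd (f i)) : Odd (∑ i ∈ s, f i) := by
  choose! k hk using hf
  rw [sum_congr rfl hk, sum_add_distrib, ← mul_sum, sum_const, nsmul_one]
  exact (even_two_mul _).add_odd hs.natCast

lemma sum_range_eq_sum_zmod {M : Type*} [AddCommMonoid M] {m : ℕ} [NeZero m] (f : ZMod m → M) :
    ∑ y ∈ range m, f y = ∑ x, f x :=
  sum_bij' (fun y _ ↦ (y : ZMod m)) (fun x _ ↦ x.val) (fun _ _ ↦ mem_univ _)
    (fun x _ ↦ mem_range.2 x.val_lt) (fun _ hy ↦ ZMod.val_cast_of_lt (mem_range.1 hy))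
    (fun x _ ↦ ZMod.natCast_zmod_val x) fun _ _ ↦ rfl

lemma modEq_zero_iff_modEq_two_mul {m x : ℤ} :
    x ≡ 0 [ZMOD m] ↔ x ≡ 0 [ZMOD 2 * m] ∨ x ≡ m [ZMOD 2 * m] := by
  constructor
  · intro h
    obtain ⟨k, rfl⟩ := Int.modEq_zero_iff_dvd.1 h
    obtain ⟨j, rfl | rfl⟩ := k.even_or_odd'
    · exact .inl (Int.modEq_zero_iff_dvd.2 ⟨j, by ring⟩)
    · exact .inr (Int.modEq_iff_dvd.2 ⟨-j, by ring⟩)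
  · rintro (h | h)
    · exact h.of_mul_left 2
    · exact (h.of_mul_left 2).trans (Int.modEq_zero_iff_dvd.2 dvd_rfl)

/-- The box `{0, …, m}^ι`. -/
abbrev natBox (ι : Type*) [Fintype ι] [DecidableEq ι] (m : ℕ) : Finset (ι → ℕ) :=
  Fintype.piFinset fun _ ↦ range (m + 1)

section Residues

variable {m : ℕ} [NeZero m]

lemma sum_range_succ_single_unit_mul {R : Type*} [Semiring R] {c : ZMod m} (hc : IsUnit c) :
    ∑ y ∈ range (m + 1), single (c * y) (1 : R) = 1 + groupSum R (ZMod m) := by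
  obtain ⟨c, rfl⟩ := hc
  have hall : ∑ y ∈ range m, single (c * (y : ZMod m)) (1 : R) = groupSum R (ZMod m) :=
    (sum_range_eq_sum_zmod fun x : ZMod m ↦ single (c * x) (1 : R)).trans
      (Equiv.sum_comp c.mulLeft fun x ↦ single x (1 : R))
  rw [sum_range_succ, hall, ZMod.natCast_self, mul_zero, ← one_def, add_comm]

variable {ι : Type*} [Fintype ι] [DecidableEq ι]

lemma sum_natBox_single_sum_unit_mul {R : Type*} [CommSemiring R]
    {c : ι → ZMod m} (hc : ∀ i, IsUnit (c i)) :
    ∑ y ∈ natBox ι m, single (∑ i, c i * y i) (1 : R) =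
      (1 + groupSum R (ZMod m)) ^ Fintype.card ι :=
  calc
    _ = ∑ y ∈ natBox ι m, ∏ i, single (c i * y i) (1 : R) := by
      simp only [prod_single, prod_const_one]
    _ = ∏ i, ∑ y ∈ range (m + 1), single (c i * y) (1 : R) :=
      (prod_univ_sum _ fun i (y : ℕ) ↦ single (c i * y) (1 : R)).symm
    _ = _ := by simp only [sum_range_succ_single_unit_mul (hc _), prod_const, card_univ]

lemma mul_card_natBox_filter_sum_unit_mul_eq {c : ι → ZMod m} (hc : ∀ i, IsUnit (c i))
    (r : ZMod m) :
    m * ((#{y ∈ natBox ι m | ∑ i, c i * y i = r} : ℤ) - if r = 0 then 1 else 0) =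
      (m + 1) ^ Fintype.card ι - 1 := by
  have hcoeff : (#{y ∈ natBox ι m | ∑ i, c i * y i = r} : ℤ) =
      ((1 + groupSum ℤ (ZMod m)) ^ Fintype.card ι).coeff r := by
    simp [← sum_natBox_single_sum_unit_mul hc, Finsupp.single_apply]
  have key := smul_one_add_pow_sub_one_of_mul_self_eq
    (groupSum_mul_self (R := ℤ) (G := ZMod m)) (Fintype.card ι)
  have hone : (1 : AddMonoidAlgebra ℤ (ZMod m)).coeff r = if r = 0 then 1 else 0 := by
    simp only [one_def, coeff_single, Finsupp.single_apply, eq_comm]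
  simpa only [coeff_smul_apply, coeff_sub, Finsupp.sub_apply, ← hcoeff, hone, coeff_groupSum,
    ZMod.card, smul_eq_mul, mul_one] using congrArg (fun z ↦ z.coeff r) key

lemma mul_card_natBox_filter_modEq_zero {a : ι → ℤ} (ha : ∀ i, IsCoprime (a i) m) :
    (m : ℤ) * (#{y ∈ natBox ι m | ∑ i, a i * (y i : ℤ) ≡ 0 [ZMOD m]} - 1) =
      (m + 1) ^ Fintype.card ι - 1 := by
  have h := mul_card_natBox_filter_sum_unit_mul_eq (c := fun i ↦ (a i : ZMod m))
    (fun i ↦ (ZMod.coe_int_isUnit_iff_isCoprime _ _).2 (ha i).symm) 0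
  simpa [← ZMod.intCast_eq_intCast_iff] using h

end Residues

section Reflection

variable {ι : Type*} [Fintype ι] [DecidableEq ι] {m : ℕ}

lemma card_natBox_filter_reflect (P : (ι → ℕ) → Prop) [DecidablePred P] :
    #{y ∈ natBox ι m | P fun i ↦ m - y i} = #{y ∈ natBox ι m | P y} := by
  have reflect_reflect {y : ι → ℕ} (hy : y ∈ natBox ι m) : (fun i ↦ m - (m - y i)) = y := by
    simp only [Fintype.mem_piFinset, mem_range, Nat.lt_succ_iff] at hy
    exact funext fun i ↦ Nat.sub_sub_self (hy i)
  refine card_nbij' (fun y i ↦ m - y i) (fun y i ↦ m - y i) ?_ ?_ ?_ ?_ <;> intro y hy <;>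
    rw [mem_coe, mem_filter] at hy
  · simpa [Nat.lt_succ_iff] using hy.2
  · simpa [Nat.lt_succ_iff, reflect_reflect hy.1] using hy.2
  all_goals exact reflect_reflect hy.1

lemma sum_mul_reflect (a : ι → ℤ) {y : ι → ℕ} (hy : y ∈ natBox ι m) :
    ∑ i, a i * ((m - y i : ℕ) : ℤ) = m * ∑ i, a i - ∑ i, a i * (y i : ℤ) := by
  simp only [Fintype.mem_piFinset, mem_range, Nat.lt_succ_iff] at hy
  simp only [Nat.cast_sub (hy _), mul_sub, sum_sub_distrib, ← sum_mul, mul_comm]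

lemma card_natBox_filter_modEq_reflect (a : ι → ℤ) (N r : ℤ) :
    #{y ∈ natBox ι m | ∑ i, a i * (y i : ℤ) ≡ m * ∑ i, a i - r [ZMOD N]} =
      #{y ∈ natBox ι m | ∑ i, a i * (y i : ℤ) ≡ r [ZMOD N]} := by
  rw [← card_natBox_filter_reflect]
  refine congrArg card (filter_congr fun y hy ↦ ?_)
  rw [sum_mul_reflect a hy]
  exact ⟨fun h ↦ by simpa using h.sub_left (m * ∑ i, a i), fun h ↦ h.sub_left _⟩

lemma card_natBox_filter_modEq_zero_eq_two_mul {a : ι → ℤ} (hm : 0 < m) (hodd : Odd (∑ i, a i)) :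
    #{y ∈ natBox ι m | ∑ i, a i * (y i : ℤ) ≡ 0 [ZMOD m]} =
      2 * #{y ∈ natBox ι m | ∑ i, a i * (y i : ℤ) ≡ 0 [ZMOD 2 * m]} := by
  have hmid : m * ∑ i, a i - 0 ≡ m [ZMOD 2 * m] := by
    obtain ⟨k, hk⟩ := hodd
    exact Int.modEq_iff_dvd.2 ⟨-k, by rw [hk]; ring⟩
  have hdisj (x : ℤ) (h₀ : x ≡ 0 [ZMOD 2 * m]) : ¬ x ≡ m [ZMOD 2 * m] := fun h₁ ↦ by
    have := Int.le_of_dvd (by lia) (Int.modEq_zero_iff_dvd.1 (h₁.symm.trans h₀))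
    lia
  have hmid_card : #{y ∈ natBox ι m | ∑ i, a i * (y i : ℤ) ≡ m [ZMOD 2 * m]} =
      #{y ∈ natBox ι m | ∑ i, a i * (y i : ℤ) ≡ 0 [ZMOD 2 * m]} := by
    rw [← card_natBox_filter_modEq_reflect a (2 * m) 0]
    exact congrArg card (filter_congr fun y _ ↦ ⟨fun h ↦ h.trans hmid.symm, fun h ↦ h.trans hmid⟩)
  simp only [modEq_zero_iff_modEq_two_mul (m := (m : ℤ))]
  rw [filter_or, card_union_of_disjoint (disjoint_filter.2 fun y _ ↦ hdisj _), hmid_card,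
    ← Nat.two_mul]

end Reflection

theorem stmt_3_general {ι : Type*} [Fintype ι] [DecidableEq ι] {α : ℕ} (hα : 0 < α)
    (hαe : Even α) {a : ι → ℤ} (ha : ∀ i, IsCoprime (a i) (α / 2 : ℕ)) (hodd : Odd (∑ i, a i)) :
    2 * α * #{y ∈ natBox ι (α / 2) | ∑ i, a i * (y i : ℤ) ≡ 0 [ZMOD α]} =
      2 * ((α / 2 + 1) ^ Fintype.card ι - 1) + α := by
  obtain ⟨m, rfl⟩ := hαe.two_dvd
  have hm : 0 < m := by lia
  have : NeZero m := ⟨hm.ne'⟩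
  simp only [Nat.mul_div_cancel_left m two_pos, Nat.cast_mul, Nat.cast_ofNat] at ha ⊢
  have hcount := mul_card_natBox_filter_modEq_zero ha
  rw [card_natBox_filter_modEq_zero_eq_two_mul hm hodd] at hcount
  have hpow : 1 ≤ (m + 1) ^ Fintype.card ι := Nat.one_le_pow' ..
  zify [hpow]
  push_cast at hcount
  linear_combination 2 * hcount

/-- Item (iv) of the counting lemma: for `α` even, `h` odd, the number `δ` of solutions of
`a₁y₁ + ⋯ + a_h y_h ≡ 0 (mod α)` with `yᵢ ∈ {0, …, α/2}` satisfies
`δ = ((α/2+1)^h − 1)/α + 1/2`, equivalently `2αδ = 2((α/2+1)^h − 1) + α`. -/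
theorem stmt_3 (α h : ℕ) (hα : 0 < α) (hαe : Even α) (hh : 0 < h) (hho : Odd h)
    (a : Fin h → ℤ) (ha : ∀ i, IsCoprime (a i) (α : ℤ))
    (δ : ℕ)
    (hδ : δ = (Finset.filter
        (fun y : Fin h → ℕ => (∑ i, a i * (y i : ℤ)) ≡ 0 [ZMOD (α : ℤ)])
        (Fintype.piFinset fun _ : Fin h => Finset.range (α / 2 + 1))).card) :
    2 * α * δ = 2 * ((α / 2 + 1) ^ h - 1) + α := by
  have hodd (i : Fin h) : Odd (a i) :=
    Int.isCoprime_two_right.1 ((ha i).of_isCoprime_of_dvd_right (mod_cast hαe.two_dvd))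
  have hhalf (i : Fin h) : IsCoprime (a i) (α / 2 : ℕ) :=
    (ha i).of_isCoprime_of_dvd_right (mod_cast Nat.div_dvd_of_dvd hαe.two_dvd)
  simpa [hδ] using stmt_3_general hα hαe hhalf (odd_sum_of_odd_card (by simpa) fun i _ ↦ hodd i)
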